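/- Let d ≥ 2 and let n_0, h, t be positive integers with gcd(n_0,t) = 1 such that the generalized arithmetic sequence n_0 and n_i = h·n_0 + i·t for i = 1,…,d is a minimal system of generators of the numerical semigroup S. Then S is homogeneous, i.e. every element of AP(S,n_0) has all its factorizations of the same length; moreover ord_S(h·n_0·⌈r/d⌉ + t·r) = ⌈r/d⌉ for every integer 0 ≤ r < n_0. -/

import Mathlib

open scoped BigOperators

/-- The value `Σ aᵢ nᵢ` of a tuple of coefficients `a` w.r.t. the generators `n`. -/
def sval {d : ℕ} (n : Fin d → ℕ) (a : Fin d → ℕ) : ℕ := ∑ i, a i * n i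

/-- The total length `Σ aᵢ` of a factorization. -/
def tlen {d : ℕ} (a : Fin d → ℕ) : ℕ := ∑ i, a i

/-- The submonoid of `ℕ` generated by `n`. -/
def gen {d : ℕ} (n : Fin d → ℕ) : Set ℕ := {s : ℕ | ∃ a : Fin d → ℕ, s = sval n a}

/-- The Apéry set of the semigroup generated by `n` with respect to `s`:
elements `x` of the semigroup such that `x - s` is not in the semigroup. -/
def Apery {d : ℕ} (n : Fin d → ℕ) (s : ℕ) : Set ℕ :=
  {x : ℕ | x ∈ gen n ∧ ¬ ∃ y ∈ gen n, x = s + y}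

/-- A subset `T` is homogeneous if every nonzero element of `T` has all its
factorizations of the same length. -/
def HomogSet {d : ℕ} (n : Fin d → ℕ) (T : Set ℕ) : Prop :=
  ∀ t ∈ T, t ≠ 0 → ∀ a b : Fin d → ℕ, sval n a = t → sval n b = t → tlen a = tlen b

/-- The order of `s`: the maximal length of a factorization of `s`. -/
noncomputable def ordS {d : ℕ} (n : Fin d → ℕ) (s : ℕ) : ℕ :=
  sSup {l : ℕ | ∃ a : Fin d → ℕ, sval n a = s ∧ tlen a = l}

/-- The torsion set of the semigroup generated by `n`, with respect to the
generator of index `i0` (the smallest generator). -/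
noncomputable def Torsion {d : ℕ} (n : Fin d → ℕ) (i0 : Fin d) : Set ℕ :=
  {s : ℕ | s ∈ gen n ∧ ∃ c : ℕ, 0 < c ∧ ordS n s + c < ordS n (s + c * n i0)}

/-- `n` is a minimal system of generators: any expression of a generator as a
nonnegative combination of the generators has total coefficient sum one. -/
def MinGen {d : ℕ} (n : Fin d → ℕ) : Prop :=
  ∀ r : Fin d, ∀ a : Fin d → ℕ, n r = sval n a → tlen a = 1

/-- `n` generates a numerical semigroup (cofinite in `ℕ`). -/
def IsNumerical {d : ℕ} (n : Fin d → ℕ) : Prop := {x : ℕ | x ∉ gen n}.Finite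

/-- The monomial `x^a = Π xᵢ^{aᵢ}`. -/
noncomputable def monom (k : Type*) [CommRing k] {d : ℕ} (a : Fin d → ℕ) :
    MvPolynomial (Fin d) k :=
  ∏ i, (MvPolynomial.X i : MvPolynomial (Fin d) k) ^ a i

/-- The toric ideal `I_S`: kernel of `k[x₁,…,x_d] → k[t]`, `xᵢ ↦ t^{nᵢ}`. -/
noncomputable def toricIdeal (k : Type*) [CommRing k] {d : ℕ} (n : Fin d → ℕ) :
    Ideal (MvPolynomial (Fin d) k) :=
  RingHom.ker (MvPolynomial.aeval (R := k)
    (fun i => (Polynomial.X : Polynomial k) ^ n i)).toRingHom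

/-- `E` is a minimal generating set of the ideal `I`: it spans `I` and no
proper subset spans `I`. -/
def IsMinGenSet {R : Type*} [CommRing R] (I : Ideal R) (E : Set R) : Prop :=
  Ideal.span E = I ∧ ∀ E' : Set R, E' ⊂ E → Ideal.span E' ≠ I

/-- Membership of an integer in the semigroup generated by `n`. -/
def memZ {d : ℕ} (n : Fin d → ℕ) (z : ℤ) : Prop := ∃ x ∈ gen n, (x : ℤ) = z

/-- A numerical semigroup with Frobenius number `F = max (ℤ ∖ S)` is symmetric
if for every integer `z`, `z ∈ S ↔ F - z ∉ S`. -/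
def IsSymmetric {d : ℕ} (n : Fin d → ℕ) : Prop :=
  ∃ F : ℤ, ¬ memZ n F ∧ (∀ z : ℤ, F < z → memZ n z) ∧
    ∀ z : ℤ, memZ n z ↔ ¬ memZ n (F - z)

/-- A numerical semigroup with Frobenius number `F = max (ℤ ∖ S)` is
pseudo-symmetric if `F` is even and for every integer `z`,
`z ∈ S ↔ (z ≠ F/2 ∧ F - z ∉ S)`. -/
def IsPseudoSymmetric {d : ℕ} (n : Fin d → ℕ) : Prop :=
  ∃ F : ℤ, ¬ memZ n F ∧ (∀ z : ℤ, F < z → memZ n z) ∧ F % 2 = 0 ∧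
    ∀ z : ℤ, memZ n z ↔ (z ≠ F / 2 ∧ ¬ memZ n (F - z))

/-- The generators `q·m₁,…,q·m_d, p·n₁,…,p·n_e` of the gluing of two numerical
semigroups. -/
def glueGen {d e : ℕ} (mg : Fin d → ℕ) (ng : Fin e → ℕ) (p q : ℕ) :
    Fin (d + e) → ℕ :=
  Fin.append (fun i => q * mg i) (fun i => p * ng i)

/-!
Write `w = ∑ i, i * aᵢ` for a factorization `a`. Modulo `n₀` its value is `w * t`, so, `t` being
invertible modulo `n₀`, the value determines `r = w % n₀`. The `m = a₁ + ⋯ + a_d` generators other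
than `n₀` account for an index sum of at most `d * m`, whence `⌈r / d⌉ ≤ m`. So the value exceeds
`h * n₀ * ⌈r / d⌉ + t * r` by `(a₀ + h * (m - ⌈r / d⌉) + (w / n₀) * t) * n₀`. As
`h * n₀ * ⌈r / d⌉ + t * r` itself lies in `S`, this excess vanishes for an Apéry element, and then
`a₀ = 0` and `m = ⌈r / d⌉`.
-/

theorem sval_add {d : ℕ} (n a b : Fin d → ℕ) : sval n (a + b) = sval n a + sval n b := by
  simp [sval, add_mul, Finset.sum_add_distrib]

theorem sval_single {d : ℕ} (n : Fin d → ℕ) (i : Fin d) (k : ℕ) :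
    sval n (Pi.single i k) = k * n i := by
  simp [sval, Pi.single_apply]

theorem tlen_eq_zero_add_tail {d : ℕ} (a : Fin (d + 1) → ℕ) :
    tlen a = a 0 + tlen (Fin.tail a) :=
  Fin.sum_univ_succ a

theorem add_mul_mem_gen {d : ℕ} {n : Fin d → ℕ} {y : ℕ} (hy : y ∈ gen n) (i : Fin d) (k : ℕ) :
    y + k * n i ∈ gen n := by
  obtain ⟨a, rfl⟩ := hy
  exact ⟨a + Pi.single i k, by rw [sval_add, sval_single]⟩

theorem eq_zero_of_add_mul_mem_Apery {d : ℕ} {n : Fin d → ℕ} {i : Fin d} {y k : ℕ}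
    (hy : y ∈ gen n) (h : y + k * n i ∈ Apery n (n i)) : k = 0 := by
  cases k with
  | zero => rfl
  | succ k => exact absurd ⟨_, add_mul_mem_gen hy i k, by ring⟩ h.2

theorem ordS_eq_of_forall_tlen_eq {d : ℕ} {n : Fin d → ℕ} {s l : ℕ} (hs : s ∈ gen n)
    (h : ∀ a, sval n a = s → tlen a = l) : ordS n s = l := by
  obtain ⟨a, rfl⟩ := hs
  have lengths_eq : {l' | ∃ b, sval n b = sval n a ∧ tlen b = l'} = {l} :=
    Set.eq_singleton_iff_unique_mem.2 ⟨⟨a, rfl, h a rfl⟩, by rintro _ ⟨b, hb, rfl⟩; exact h b hb⟩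
  rw [ordS, lengths_eq, csSup_singleton]

/-- The generalized arithmetic sequence `n₀, h * n₀ + t, …, h * n₀ + d * t`. -/
def genArithSeq (d n0 h t : ℕ) (i : Fin (d + 1)) : ℕ :=
  if (i : ℕ) = 0 then n0 else h * n0 + (i : ℕ) * t

/-- The index sum `∑ i, aᵢ * i` of a factorization, that is, the coefficient of `t` in
the corresponding sum of terms of a generalized arithmetic sequence. -/
def indexSum {d : ℕ} (a : Fin (d + 1) → ℕ) : ℕ := sval (fun i => (i : ℕ)) a

/-- The candidate `h * n₀ * ⌈r / d⌉ + t * r` for the element of the Apéry set that is congruent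
to `t * r` modulo `n₀`. -/
def aperyElem (d n0 h t r : ℕ) : ℕ := h * n0 * (r ⌈/⌉ d) + t * r

section GeneralizedArithmeticSequence

variable {d n0 h t : ℕ}

theorem indexSum_eq_sum_succ (a : Fin (d + 1) → ℕ) :
    indexSum a = ∑ i : Fin d, a i.succ * (i.succ : ℕ) := by
  simp [indexSum, sval, Fin.sum_univ_succ]

theorem indexSum_le (a : Fin (d + 1) → ℕ) : indexSum a ≤ d * tlen (Fin.tail a) := by
  rw [indexSum_eq_sum_succ, mul_comm, tlen, Finset.sum_mul]
  exact Finset.sum_le_sum fun i _ => Nat.mul_le_mul_left _ i.succ.is_le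

theorem sval_genArithSeq (a : Fin (d + 1) → ℕ) :
    sval (genArithSeq d n0 h t) a =
      (a 0 + h * tlen (Fin.tail a)) * n0 + indexSum a * t := by
  calc sval (genArithSeq d n0 h t) a
      = a 0 * n0 + ∑ i : Fin d, a i.succ * (h * n0 + (i.succ : ℕ) * t) := by
        simp [sval, genArithSeq, Fin.sum_univ_succ]
    _ = a 0 * n0 + (tlen (Fin.tail a) * (h * n0) + indexSum a * t) := by
        simp only [indexSum_eq_sum_succ, tlen, Fin.tail, mul_add, ← mul_assoc,
          Finset.sum_add_distrib, Finset.sum_mul]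
    _ = _ := by ring

theorem mul_add_mul_mem_gen (hd : 0 < d) {m w : ℕ} (hmw : m ≤ w) (hwm : w ≤ d * m) :
    h * n0 * m + t * w ∈ gen (genArithSeq d n0 h t) := by
  induction m generalizing w with
  | zero => exact ⟨0, by simp_all [sval]⟩
  | succ m ih =>
    -- Peel off the largest index that leaves at least `m` for the remaining `m` terms.
    obtain ⟨i, v, rfl, hi_pos, hid, hmv, hvm⟩ :
        ∃ i v, w = v + i ∧ 0 < i ∧ i ≤ d ∧ m ≤ v ∧ v ≤ d * m := by
      have hm : m ≤ d * m := Nat.le_mul_of_pos_left m hd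
      rw [mul_add_one] at hwm
      exact ⟨min d (w - m), w - min d (w - m), by omega⟩
    convert add_mul_mem_gen (ih hmv hvm) ⟨i, Nat.lt_succ_of_le hid⟩ 1 using 1
    rw [genArithSeq, if_neg hi_pos.ne']
    ring

theorem aperyElem_mem_gen (hd : 0 < d) (r : ℕ) :
    aperyElem d n0 h t r ∈ gen (genArithSeq d n0 h t) := by
  have ceil_le_self : r ⌈/⌉ d ≤ r := (ceilDiv_le_iff_le_mul hd).2 (Nat.le_mul_of_pos_left r hd)
  have le_mul_ceil : r ≤ d * (r ⌈/⌉ d) := le_smul_ceilDiv hd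
  exact mul_add_mul_mem_gen hd ceil_le_self le_mul_ceil

theorem exists_sval_eq_aperyElem_add (hd : 0 < d) (a : Fin (d + 1) → ℕ) :
    ∃ e, tlen (Fin.tail a) = (indexSum a % n0) ⌈/⌉ d + e ∧
      sval (genArithSeq d n0 h t) a =
        aperyElem d n0 h t (indexSum a % n0) + (a 0 + h * e + indexSum a / n0 * t) * n0 := by
  have ceil_le : (indexSum a % n0) ⌈/⌉ d ≤ tlen (Fin.tail a) :=
    (ceilDiv_le_iff_le_mul hd).2 ((Nat.mod_le _ _).trans (indexSum_le a))
  obtain ⟨e, he⟩ := Nat.exists_eq_add_of_le ceil_le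
  refine ⟨e, he, ?_⟩
  calc sval (genArithSeq d n0 h t) a
      = (a 0 + h * tlen (Fin.tail a)) * n0 +
          (indexSum a % n0 + n0 * (indexSum a / n0)) * t := by
        rw [sval_genArithSeq, Nat.mod_add_div]
    _ = _ := by rw [he, aperyElem]; ring

theorem indexSum_mod_eq_of_sval_eq_aperyElem (hcop : Nat.Coprime n0 t) {r : ℕ} (hr : r < n0)
    {a : Fin (d + 1) → ℕ} (ha : sval (genArithSeq d n0 h t) a = aperyElem d n0 h t r) :
    indexSum a % n0 = r := by
  have modEq_mul : indexSum a * t ≡ r * t [MOD n0] := by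
    rw [sval_genArithSeq, aperyElem] at ha
    calc indexSum a * t
        ≡ (a 0 + h * tlen (Fin.tail a)) * n0 + indexSum a * t [MOD n0] := by simp [Nat.ModEq]
      _ = h * (r ⌈/⌉ d) * n0 + r * t := by rw [ha]; ring
      _ ≡ r * t [MOD n0] := by simp [Nat.ModEq]
  exact Nat.mod_eq_of_modEq (modEq_mul.cancel_right_of_coprime hcop) hr

theorem tlen_eq_of_sval_eq_aperyElem (hd : 0 < d) (hh : 0 < h) (hcop : Nat.Coprime n0 t)
    {r : ℕ} (hr : r < n0) {a : Fin (d + 1) → ℕ}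
    (ha : sval (genArithSeq d n0 h t) a = aperyElem d n0 h t r) : tlen a = r ⌈/⌉ d := by
  obtain ⟨e, he, hsval⟩ := exists_sval_eq_aperyElem_add (n0 := n0) (h := h) (t := t) hd a
  rw [indexSum_mod_eq_of_sval_eq_aperyElem hcop hr ha] at he hsval
  have excess_eq_zero : a 0 + h * e + indexSum a / n0 * t = 0 :=
    (Nat.mul_eq_zero.1 (by omega)).resolve_right (Nat.ne_zero_of_lt hr)
  have a_zero_eq_zero : a 0 = 0 := by omega
  have e_eq_zero : e = 0 := (Nat.mul_eq_zero.1 (by omega)).resolve_left hh.ne'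
  rw [tlen_eq_zero_add_tail, he, a_zero_eq_zero, e_eq_zero, zero_add, add_zero]

theorem exists_eq_aperyElem_of_mem_Apery (hd : 0 < d) (hn0 : 0 < n0) {x : ℕ}
    (hx : x ∈ Apery (genArithSeq d n0 h t) n0) : ∃ r < n0, x = aperyElem d n0 h t r := by
  obtain ⟨a, rfl⟩ := hx.1
  obtain ⟨e, -, hsval⟩ := exists_sval_eq_aperyElem_add (n0 := n0) (h := h) (t := t) hd a
  have excess_eq_zero : a 0 + h * e + indexSum a / n0 * t = 0 :=
    eq_zero_of_add_mul_mem_Apery (i := 0) (aperyElem_mem_gen hd _) (hsval ▸ hx)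
  exact ⟨indexSum a % n0, Nat.mod_lt _ hn0, by rw [hsval, excess_eq_zero, zero_mul, add_zero]⟩

theorem statement4_general (hd : 0 < d) (hn0 : 0 < n0) (hh : 0 < h) (hcop : Nat.Coprime n0 t) :
    HomogSet (genArithSeq d n0 h t) (Apery (genArithSeq d n0 h t) n0) ∧
      ∀ r < n0, ordS (genArithSeq d n0 h t) (h * n0 * (r ⌈/⌉ d) + t * r) = r ⌈/⌉ d := by
  refine ⟨fun x hx _ a b ha hb => ?_, fun r hr => ?_⟩
  · obtain ⟨r, hr, rfl⟩ := exists_eq_aperyElem_of_mem_Apery hd hn0 hx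
    rw [tlen_eq_of_sval_eq_aperyElem hd hh hcop hr ha,
      tlen_eq_of_sval_eq_aperyElem hd hh hcop hr hb]
  · exact ordS_eq_of_forall_tlen_eq (aperyElem_mem_gen hd r)
      fun _ => tlen_eq_of_sval_eq_aperyElem hd hh hcop hr

end GeneralizedArithmeticSequence

/-- a numerical semigroup generated by a generalized arithmetic
sequence `n₀, h·n₀ + i·t (i = 1,…,d)` is homogeneous, and
`ord_S(h·n₀·⌈r/d⌉ + t·r) = ⌈r/d⌉` for `0 ≤ r < n₀`. -/
theorem statement4 (d n0 h t : ℕ) (hd : 2 ≤ d) (hn0 : 0 < n0) (hh : 0 < h)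
    (ht : 0 < t) (hcop : Nat.Coprime n0 t)
    (hmin : MinGen (fun i : Fin (d + 1) =>
      if (i : ℕ) = 0 then n0 else h * n0 + (i : ℕ) * t)) :
    HomogSet (fun i : Fin (d + 1) =>
        if (i : ℕ) = 0 then n0 else h * n0 + (i : ℕ) * t)
      (Apery (fun i : Fin (d + 1) =>
        if (i : ℕ) = 0 then n0 else h * n0 + (i : ℕ) * t) n0) ∧
    ∀ r : ℕ, r < n0 →
      ordS (fun i : Fin (d + 1) =>
          if (i : ℕ) = 0 then n0 else h * n0 + (i : ℕ) * t)
        (h * n0 * ((r + d - 1) / d) + t * r) = (r + d - 1) / d :=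
  statement4_general (by omega) hn0 hh hcop
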